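/- Let v, w, w̃ ∈ 𝒲 with w nonempty, w̃ ∼ w and v ≁ w. If w⁻ ∼ (w̃)⁻, then the Martin kernel satisfies k(v,w) = k(v,w̃). -/

import Mathlib

open Classical

namespace Martin

/-- Finite words over the alphabet `Fin N` (the empty list is the empty word `∅`;
`w ++ [i]` is the word `wi` and `w.dropLast` is the parent `w⁻`). -/
abbrev Word (N : ℕ) := List (Fin N)

/-- The mass of a word: `m(w₁⋯wₙ) = m(w₁)⋯m(wₙ)`, `m(∅) = 1`. -/
noncomputable def mW {N : ℕ} (m : Fin N → ℝ) (w : Word N) : ℝ := (w.map m).prod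

/-- Total mass of the equivalence class of `v`: `Σ_{v̂ ∼ v} m(v̂)`. -/
noncomputable def massCl {N : ℕ} (sim : Word N → Word N → Prop) (m : Fin N → ℝ)
    (v : Word N) : ℝ :=
  ∑ᶠ u ∈ {u : Word N | sim u v}, mW m u

/-- Transition probability: `p(v,w) = m(w)/(Σ_{v̂∼v} m(v̂))` if `w = v̂i` for some
`v̂ ∼ v`, `i ∈ 𝒜`, and `0` otherwise. -/
noncomputable def pTrans {N : ℕ} (sim : Word N → Word N → Prop) (m : Fin N → ℝ)
    (v w : Word N) : ℝ :=
  if ∃ v' : Word N, ∃ i : Fin N, sim v' v ∧ w = v' ++ [i] then mW m w / massCl sim m v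
  else 0

/-- `n`-step transition probabilities: `p₀(v,w) = δ_v(w)`,
`pₙ(v,w) = Σ_u pₙ₋₁(v,u) p(u,w)`. -/
noncomputable def pn {N : ℕ} (sim : Word N → Word N → Prop) (m : Fin N → ℝ) :
    ℕ → Word N → Word N → ℝ
  | 0, v, w => if w = v then 1 else 0
  | n + 1, v, w => ∑ᶠ u : Word N, pn sim m n v u * pTrans sim m u w

/-- The Green function `g(v,w) = p_{|w|−|v|}(v,w)` (it equals `0` when `|w| < |v|`,
by truncated subtraction and since then `v ≠ w`). -/
noncomputable def green {N : ℕ} (sim : Word N → Word N → Prop) (m : Fin N → ℝ)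
    (v w : Word N) : ℝ :=
  pn sim m (w.length - v.length) v w

/-- The function `q(v,w) = g(v,w)·(Σ_{v̂∼v} m(v̂))/m(w)` for `v ≠ w`, `q(v,v) = 1`. -/
noncomputable def qfun {N : ℕ} (sim : Word N → Word N → Prop) (m : Fin N → ℝ)
    (v w : Word N) : ℝ :=
  if v = w then 1 else green sim m v w * massCl sim m v / mW m w

/-- The Martin kernel `k(v,w) = g(v,w)/g(∅,w)`. -/
noncomputable def mkernel {N : ℕ} (sim : Word N → Word N → Prop) (m : Fin N → ℝ)
    (v w : Word N) : ℝ :=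
  green sim m v w / green sim m [] w

/-- `R(w)`: the number of words equivalent to `w`. -/
noncomputable def Rnum {N : ℕ} (sim : Word N → Word N → Prop) (w : Word N) : ℕ :=
  Set.ncard {u : Word N | sim u w}

/-- Assumption (B2): for every word `w`, either all equivalent words have the same mass,
or all equivalent words have equivalent parents. -/
def B2 {N : ℕ} (sim : Word N → Word N → Prop) (m : Fin N → ℝ) : Prop :=
  ∀ w : Word N, (∀ w', sim w' w → mW m w' = mW m w) ∨
    (∀ w', sim w' w → sim w'.dropLast w.dropLast)

/-! Every `u` in the class of `w⁻` jumps to `w` with the same probability `m(w) / m([w⁻])`. Summing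
over the last step, `g(v,w) = m(w) / m([w⁻]) · g(v,[w⁻])` for every `v ≠ w`, where
`g(v,[x]) = Σ_{u ∼ x} g(v,u)` and `m([x]) = Σ_{u ∼ x} m(u)`. The first factor does not
depend on `v`, so it cancels in `k(v,w) = g(v,[w⁻]) / g(∅,[w⁻])`, which sees `w` only through the
class of its parent. -/

section

variable {N : ℕ} {sim : Word N → Word N → Prop} {m : Fin N → ℝ}

/-- The Green function of a class, `g(v,[x]) = Σ_{u ∼ x} g(v,u)`: when `m` sums to `1`, the
probability that the walk started at `v` ever visits the class of `x`. -/
noncomputable def greenCl (sim : Word N → Word N → Prop) (m : Fin N → ℝ) (v x : Word N) : ℝ :=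
  ∑ᶠ u ∈ {u : Word N | sim u x}, green sim m v u

theorem setOf_sim_congr (hsim : Equivalence sim) {x y : Word N} (hxy : sim x y) :
    {u | sim u x} = {u | sim u y} :=
  Set.ext fun _ => ⟨fun hu => hsim.trans hu hxy, fun hu => hsim.trans hu (hsim.symm hxy)⟩

theorem massCl_congr (hsim : Equivalence sim) {x y : Word N} (hxy : sim x y) :
    massCl sim m x = massCl sim m y := by
  rw [massCl, massCl, setOf_sim_congr hsim hxy]

theorem greenCl_congr (hsim : Equivalence sim) {x y : Word N} (hxy : sim x y) (v : Word N) :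
    greenCl sim m v x = greenCl sim m v y := by
  rw [greenCl, greenCl, setOf_sim_congr hsim hxy]

theorem finite_setOf_sim (hlen : ∀ v w : Word N, sim v w → v.length = w.length) (x : Word N) :
    {u | sim u x}.Finite :=
  (List.finite_length_eq (Fin N) x.length).subset fun u hu => hlen u x hu

theorem mW_pos (hm : ∀ a, 0 < m a) (w : Word N) : 0 < mW m w :=
  List.prod_pos (List.forall_mem_map.2 fun a _ => hm a)

theorem massCl_pos (hrefl : ∀ x, sim x x)
    (hlen : ∀ v w : Word N, sim v w → v.length = w.length) (hm : ∀ a, 0 < m a) (x : Word N) :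
    0 < massCl sim m x := by
  rw [massCl, finsum_mem_eq_finite_toFinset_sum _ (finite_setOf_sim hlen x)]
  exact Finset.sum_pos (fun u _ => mW_pos hm u)
    ⟨x, (finite_setOf_sim hlen x).mem_toFinset.2 (hrefl x)⟩

theorem pTrans_of_ne_nil (u : Word N) {w : Word N} (hw : w ≠ []) :
    pTrans sim m u w = if sim w.dropLast u then mW m w / massCl sim m u else 0 := by
  have child_iff : (∃ v' : Word N, ∃ i : Fin N, sim v' u ∧ w = v' ++ [i]) ↔ sim w.dropLast u := by
    constructor
    · rintro ⟨v', i, hv', rfl⟩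
      rwa [List.dropLast_concat]
    · exact fun hu => ⟨w.dropLast, w.getLast hw, hu, (List.dropLast_append_getLast hw).symm⟩
  simp only [pTrans, child_iff]

theorem pn_succ_of_ne_nil (hsim : Equivalence sim) (n : ℕ) (v : Word N) {w : Word N}
    (hw : w ≠ []) :
    pn sim m (n + 1) v w =
      mW m w / massCl sim m w.dropLast * ∑ᶠ u ∈ {u | sim u w.dropLast}, pn sim m n v u := by
  rw [pn, ← smul_eq_mul, smul_finsum]
  refine finsum_congr fun u => ?_
  rw [pTrans_of_ne_nil u hw]
  by_cases hu : sim u w.dropLast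
  · simp [hu, hsim.symm hu, massCl_congr hsim hu, mul_comm]
  · have hu' : ¬ sim w.dropLast u := fun h => hu (hsim.symm h)
    simp [hu, hu']

theorem green_eq_zero_of_length_le {v w : Word N} (hvw : v ≠ w) (hle : w.length ≤ v.length) :
    green sim m v w = 0 := by
  rw [green, Nat.sub_eq_zero_of_le hle, pn, if_neg hvw.symm]

theorem green_eq_mul_greenCl (hsim : Equivalence sim)
    (hlen : ∀ v w : Word N, sim v w → v.length = w.length) {v w : Word N} (hw : w ≠ [])
    (hvw : v ≠ w) :
    green sim m v w = mW m w / massCl sim m w.dropLast * greenCl sim m v w.dropLast := by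
  have length_pos : 0 < w.length := List.length_pos_iff.2 hw
  have length_class (u : Word N) (hu : sim u w.dropLast) : u.length = w.length - 1 :=
    (hlen _ _ hu).trans List.length_dropLast
  rcases lt_or_ge v.length w.length with hlt | hge
  · have length_sub : w.length - v.length = w.length - 1 - v.length + 1 := by omega
    have greenCl_eq : greenCl sim m v w.dropLast =
        ∑ᶠ u ∈ {u | sim u w.dropLast}, pn sim m (w.length - 1 - v.length) v u :=
      finsum_mem_congr rfl fun u hu => by rw [green, length_class u hu]
    rw [green, length_sub, pn_succ_of_ne_nil hsim _ v hw, greenCl_eq]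
  · have greenCl_eq_zero : greenCl sim m v w.dropLast = 0 :=
      finsum_mem_of_eqOn_zero fun u hu => by
        have hult : u.length < v.length := by
          rw [length_class u hu]
          omega
        exact green_eq_zero_of_length_le (ne_of_apply_ne List.length hult.ne') hult.le
    rw [green_eq_zero_of_length_le hvw hge, greenCl_eq_zero, mul_zero]

theorem mkernel_eq_greenCl_div (hsim : Equivalence sim)
    (hlen : ∀ v w : Word N, sim v w → v.length = w.length) (hm : ∀ a, 0 < m a)
    {v w : Word N} (hw : w ≠ []) (hvw : v ≠ w) :
    mkernel sim m v w = greenCl sim m v w.dropLast / greenCl sim m [] w.dropLast := by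
  have factor_pos : 0 < mW m w / massCl sim m w.dropLast :=
    div_pos (mW_pos hm w) (massCl_pos hsim.refl hlen hm _)
  rw [mkernel, green_eq_mul_greenCl hsim hlen hw hvw, green_eq_mul_greenCl hsim hlen hw hw.symm,
    mul_div_mul_left _ _ factor_pos.ne']

theorem mkernel_of_parent_sim_general (hsim : Equivalence sim)
    (hlen : ∀ v w : Word N, sim v w → v.length = w.length) (hm : ∀ a, 0 < m a)
    {v w wt : Word N} (hw : w ≠ []) (hwt : wt ≠ []) (hvw : v ≠ w) (hvwt : v ≠ wt)
    (hparent : sim w.dropLast wt.dropLast) : mkernel sim m v w = mkernel sim m v wt := by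
  rw [mkernel_eq_greenCl_div hsim hlen hm hw hvw, mkernel_eq_greenCl_div hsim hlen hm hwt hvwt,
    greenCl_congr hsim hparent, greenCl_congr hsim hparent]

end

/-- Lemma 4.2 e): if `w̃ ∼ w` have equivalent parents and `v ≁ w`,
then `k(v,w) = k(v,w̃)`. -/
theorem mkernel_of_parent_sim {N : ℕ} (hN : 2 ≤ N)
    (sim : Word N → Word N → Prop) (hsim : Equivalence sim)
    (hlen : ∀ v w : Word N, sim v w → v.length = w.length)
    (m : Fin N → ℝ) (hm : ∀ a, m a ∈ Set.Ioo (0 : ℝ) 1)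
    (hm1 : ∑ a, m a = 1) :
    ∀ v w wt : Word N, w ≠ [] → sim wt w → ¬ sim v w →
      sim w.dropLast wt.dropLast → mkernel sim m v w = mkernel sim m v wt := by
  intro v w wt hw hwt hv hparent
  have hwt_ne : wt ≠ [] := List.ne_nil_of_length_pos (hlen wt w hwt ▸ List.length_pos_iff.2 hw)
  exact mkernel_of_parent_sim_general hsim hlen (fun a => (hm a).1) hw hwt_ne
    (fun h => hv (h ▸ hsim.refl v)) (fun h => hv (h ▸ hwt)) hparent

end Martin
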